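/- Let G₁ be an r₁-regular graph on n₁ vertices and m₁ edges, and G₂ an r₂-regular graph on n₂ vertices, and let α ∈ [0,1]. (1) If r₁ = 1 (so G₁ = P₂, n₁ = 2, m₁ = 1), then the A_α-spectrum of the subdivision-vertex join G₁ ∨̇ G₂ consists precisely of: α(1+n₂); the values 2α + λ_i(A_α(G₂)) for i = 2,…,n₂; and the three roots of F(x) = (x−2α−r₂)(x² − α(3+n₂)x − 2(1−2α−α²n₂)) − 2n₂(1−α)²(x−2α). (2) If r₁ ≥ 2, then the A_α-spectrum of G₁ ∨̇ G₂ consists precisely of: 2α repeated m₁−n₁ times; αn₁ + λ_i(A_α(G₂)) for i = 2,…,n₂; the two roots of G_i(x) = x² − α(2+r₁+n₂)x + α(αr₁+r₁+2αn₂) − (1−α)(r₁(1−α) + λ_i(A_α(G₁))) for each i = 2,…,n₁; and the three roots of F(x) = (x−αn₁−r₂)(x² − α(2+r₁+n₂)x − 2(r₁−2αr₁−α²n₂)) − n₁n₂(1−α)²(x−2α). -/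

import Mathlib

open Matrix Polynomial
open scoped Classical

noncomputable section

/-- `A_α(G) = α·D(G) + (1-α)·A(G)`, where `D(G)` is the diagonal degree matrix and
`A(G)` the adjacency matrix. -/
def Aalpha {V : Type*} [Fintype V] (G : SimpleGraph V) (α : ℝ) : Matrix V V ℝ :=
  α • Matrix.diagonal (fun v => (G.degree v : ℝ)) + (1 - α) • G.adjMatrix ℝ

/-- The subdivision-vertex join `G₁ ∨̇ G₂`: take the subdivision graph `S(G₁)` (a new
vertex inserted in each edge of `G₁`) together with `G₂`, and join every original vertex
of `G₁` with every vertex of `G₂`. -/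
def subdivisionVertexJoin {V₁ V₂ : Type*} (G₁ : SimpleGraph V₁) (G₂ : SimpleGraph V₂) :
    SimpleGraph (V₁ ⊕ (↥G₁.edgeSet ⊕ V₂)) :=
  SimpleGraph.fromRel fun a b =>
    match a, b with
    | Sum.inl v, Sum.inr (Sum.inl e) => v ∈ (e : Sym2 V₁)
    | Sum.inl _, Sum.inr (Sum.inr _) => True
    | Sum.inr (Sum.inr u), Sum.inr (Sum.inr w) => G₂.Adj u w
    | _, _ => False

/-- Rank-one update of a determinant along the all-ones matrix, for a matrix with constant
row sums. -/
theorem det_sub_const_of_mulVec_one {V : Type*} [Fintype V] [DecidableEq V]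
    {M : Matrix V V ℝ} {s : ℝ} (hs : s ≠ 0) (hM : M *ᵥ 1 = s • 1) (t : ℝ) :
    (M - Matrix.of fun _ _ => t).det = M.det * (1 - Fintype.card V * t / s) := by
  have hrow (i : V) : ∑ j, M i j = s := by
    simpa [Matrix.mulVec, dotProduct] using congrFun hM i
  have hfac : M - Matrix.of (fun _ _ => t) =
      M * (1 + replicateCol Unit (fun _ => -(t / s)) * replicateRow Unit (fun _ => (1 : ℝ))) := by
    ext i j
    rw [Matrix.mul_add, Matrix.mul_one]
    simp only [Matrix.sub_apply, Matrix.add_apply, Matrix.mul_apply, Matrix.of_apply,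
      replicateCol_apply, replicateRow_apply, Finset.univ_unique, Finset.sum_const,
      Finset.card_singleton, one_smul, mul_one, ← Finset.sum_mul, hrow]
    field_simp
    ring
  rw [hfac, det_mul, det_one_add_replicateCol_mul_replicateRow]
  simp [dotProduct]
  left
  ring

/-- Determinant of a symmetric block matrix whose lower right block is block diagonal, with a
scalar block and a block of constant row sums. -/
theorem det_fromBlocks_scalar_const {V E W : Type*} [Fintype V] [DecidableEq V] [Fintype E]
    [DecidableEq E] [Fintype W] [DecidableEq W] (P : Matrix V V ℝ) (R : Matrix V E ℝ)
    {Q : Matrix W W ℝ} {d q : ℝ} (c : ℝ) (hd : d ≠ 0) (hQ : Q.det ≠ 0) (hq : q ≠ 0)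
    (hrow : Q *ᵥ 1 = q • 1) :
    (fromBlocks P (fromCols R (Matrix.of fun _ _ => c)) (fromRows Rᵀ (Matrix.of fun _ _ => c))
      (fromBlocks (d • 1) 0 0 Q)).det =
    d ^ Fintype.card E * Q.det *
      (P - d⁻¹ • (R * Rᵀ) - Matrix.of fun _ _ => c ^ 2 * Fintype.card W / q).det := by
  have hu : IsUnit Q.det := hQ.isUnit
  have hdet : (fromBlocks (d • (1 : Matrix E E ℝ)) 0 0 Q).det = d ^ Fintype.card E * Q.det := by
    simp [det_fromBlocks_zero₂₁]
  have hinv : (fromBlocks (d • (1 : Matrix E E ℝ)) 0 0 Q)⁻¹ = fromBlocks (d⁻¹ • 1) 0 0 Q⁻¹ := by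
    apply inv_eq_right_inv
    simp [fromBlocks_multiply, hd, mul_nonsing_inv Q hu]
  have hQinv : Q⁻¹ *ᵥ 1 = q⁻¹ • 1 := by
    have h := congrArg (fun v => q⁻¹ • (Q⁻¹ *ᵥ v)) hrow
    simpa [Matrix.mulVec_mulVec, nonsing_inv_mul Q hu, Matrix.mulVec_smul, smul_smul, hq]
      using h.symm
  have hJ : (Matrix.of fun (_ : V) (_ : W) => c) * Q⁻¹ * (Matrix.of fun (_ : W) (_ : V) => c) =
      Matrix.of fun _ _ => c ^ 2 * Fintype.card W / q := by
    ext i j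
    have hr (k : W) : ∑ l, Q⁻¹ k l = q⁻¹ := by
      simpa [Matrix.mulVec, dotProduct] using congrFun hQinv k
    rw [Matrix.mul_assoc]
    simp only [Matrix.mul_apply, Matrix.of_apply, ← Finset.sum_mul, hr]
    simp
    ring
  let := invertibleOfIsUnitDet (fromBlocks (d • (1 : Matrix E E ℝ)) 0 0 Q)
    (by rw [hdet]; exact (mul_ne_zero (pow_ne_zero _ hd) hQ).isUnit)
  rw [det_fromBlocks₂₂, hdet, invOf_eq_nonsing_inv, hinv, fromCols_mul_fromBlocks,
    fromCols_mul_fromRows]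
  simp only [Matrix.mul_zero, add_zero, zero_add, hJ]
  congr 2
  simp [sub_sub]

theorem det_smul_one_sub_smul_of_charpoly {V : Type*} [Fintype V] [DecidableEq V]
    {M : Matrix V V ℝ} {μ : V → ℝ} (h : M.charpoly = ∏ i, (X - C (μ i))) (p q : ℝ) :
    (p • 1 - q • M).det = ∏ i, (p - q * μ i) := by
  by_cases hq : q = 0
  · simp [hq]
  have key := congrArg (Polynomial.eval (p / q)) h
  rw [eval_charpoly, eval_prod] at key
  have hfac : p • 1 - q • M = q • (scalar V (p / q) - M) := by
    ext i j
    simp [Matrix.one_apply, diagonal_apply]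
    split_ifs <;> field_simp
    ring
  rw [hfac, det_smul, key, Fintype.card, ← Finset.prod_const, ← Finset.prod_mul_distrib]
  refine Finset.prod_congr rfl fun i _ => ?_
  simp
  field_simp

theorem sum_adjMatrix_apply {V : Type*} [Fintype V] (G : SimpleGraph V) (i : V) :
    ∑ j, G.adjMatrix ℝ i j = G.degree i := by
  simpa [Matrix.mulVec, dotProduct] using G.adjMatrix_mulVec_const_apply (a := (1 : ℝ)) (v := i)

section Aalpha

variable {V : Type*} [Fintype V] {G : SimpleGraph V} {r : ℕ}

theorem Aalpha_of_isRegular [DecidableEq V] (hreg : G.IsRegularOfDegree r) (α : ℝ) :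
    Aalpha G α = (α * r) • 1 + (1 - α) • G.adjMatrix ℝ := by
  ext i j
  simp [Aalpha, hreg.degree_eq, diagonal_apply, Matrix.one_apply]

theorem sum_Aalpha_apply (α : ℝ) (i : V) : ∑ j, Aalpha G α i j = G.degree i := by
  simp only [Aalpha, Matrix.add_apply, Matrix.smul_apply, smul_eq_mul, diagonal_apply,
    Finset.sum_add_distrib, ← Finset.mul_sum, sum_adjMatrix_apply]
  simp
  ring

theorem Aalpha_mulVec_one (hreg : G.IsRegularOfDegree r) (α : ℝ) :
    Aalpha G α *ᵥ 1 = (r : ℝ) • 1 := by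
  ext i
  simp [Matrix.mulVec, dotProduct, sum_Aalpha_apply, hreg.degree_eq i]

theorem le_of_isRoot_charpoly_Aalpha [DecidableEq V] (hreg : G.IsRegularOfDegree r) {α : ℝ}
    (hα : α ∈ Set.Icc (0 : ℝ) 1) {x : ℝ} (hx : (Aalpha G α).charpoly.IsRoot x) : x ≤ r := by
  rw [← mem_spectrum_iff_isRoot_charpoly, ← Matrix.spectrum_toLin',
    ← Module.End.hasEigenvalue_iff_mem_spectrum] at hx
  obtain ⟨k, hk⟩ := eigenvalue_mem_ball hx
  have hnn (j : V) : 0 ≤ Aalpha G α k j := by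
    rw [Aalpha_of_isRegular hreg]
    have h1 := hα.1
    have h2 := sub_nonneg.2 hα.2
    simp only [Matrix.add_apply, Matrix.smul_apply, smul_eq_mul, Matrix.one_apply,
      SimpleGraph.adjMatrix_apply]
    positivity
  have hsum := sum_Aalpha_apply (G := G) α k
  rw [← Finset.add_sum_erase _ _ (Finset.mem_univ k), hreg.degree_eq k] at hsum
  rw [Metric.mem_closedBall, Real.dist_eq,
    Finset.sum_congr rfl fun j _ => Real.norm_of_nonneg (hnn j)] at hk
  linarith [le_abs_self (x - Aalpha G α k k)]

theorem isRoot_charpoly_Aalpha [Nonempty V] [DecidableEq V] (hreg : G.IsRegularOfDegree r)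
    (α : ℝ) : (Aalpha G α).charpoly.IsRoot r := by
  rw [IsRoot, eval_charpoly, ← exists_mulVec_eq_zero_iff]
  refine ⟨1, one_ne_zero, ?_⟩
  rw [Matrix.sub_mulVec, Aalpha_mulVec_one hreg]
  ext i
  simp

end Aalpha

theorem Aalpha_top_eigenvalue {n r : ℕ} [NeZero n] {G : SimpleGraph (Fin n)}
    (hreg : G.IsRegularOfDegree r) {α : ℝ} (hα : α ∈ Set.Icc (0 : ℝ) 1) {μ : Fin n → ℝ}
    (hμ : Antitone μ) (hch : (Aalpha G α).charpoly = ∏ i, (X - C (μ i))) : μ 0 = r := by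
  have hroot (x : ℝ) : (Aalpha G α).charpoly.IsRoot x ↔ ∃ i, x = μ i := by
    simp [hch, IsRoot, eval_prod, Finset.prod_eq_zero_iff, sub_eq_zero]
  apply le_antisymm
  · exact le_of_isRoot_charpoly_Aalpha hreg hα ((hroot _).2 ⟨0, rfl⟩)
  · obtain ⟨i, hi⟩ := (hroot _).1 (isRoot_charpoly_Aalpha hreg α)
    exact hi.trans_le (hμ (Fin.zero_le i))

section subdivisionVertexJoin

variable {V₁ V₂ : Type*} (G₁ : SimpleGraph V₁) (G₂ : SimpleGraph V₂)

/-- The incidence matrix with columns restricted to the edges of the graph. -/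
def edgeIncMatrix [DecidableEq V₁] : Matrix V₁ G₁.edgeSet ℝ :=
  Matrix.of fun v e => G₁.incMatrix ℝ v e

theorem adjMatrix_subdivisionVertexJoin [DecidableEq V₁] :
    (subdivisionVertexJoin G₁ G₂).adjMatrix ℝ =
      fromBlocks 0
        (fromCols (edgeIncMatrix G₁) (Matrix.of fun _ _ => 1))
        (fromRows (edgeIncMatrix G₁)ᵀ (Matrix.of fun _ _ => 1))
        (fromBlocks 0 0 0 (G₂.adjMatrix ℝ)) := by
  ext (v | ⟨e, he⟩ | u) (w | ⟨f, hf⟩ | u') <;> rw [SimpleGraph.adjMatrix_apply] <;>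
    simp only [subdivisionVertexJoin, SimpleGraph.fromRel_adj] <;>
    simp_all [edgeIncMatrix, SimpleGraph.incMatrix_apply', SimpleGraph.incidenceSet]
  exact if_congr ⟨fun h => h.2.elim id (G₂.adj_symm ·), fun h => ⟨G₂.ne_of_adj h, Or.inl h⟩⟩ rfl rfl

variable {G₁ G₂}

theorem sum_edgeSet_of_eq_zero [Fintype V₁] [Fintype G₁.edgeSet] (f : Sym2 V₁ → ℝ)
    (hf : ∀ e ∉ G₁.edgeSet, f e = 0) : ∑ e : G₁.edgeSet, f e = ∑ e, f e :=
  Fintype.sum_of_injective Subtype.val Subtype.val_injective _ _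
    (by simpa using hf) fun _ => rfl

theorem sum_edgeSet_incMatrix [Fintype V₁] [DecidableEq V₁] [Fintype G₁.edgeSet] (v : V₁) :
    ∑ e : G₁.edgeSet, G₁.incMatrix ℝ v e = G₁.degree v := by
  rw [sum_edgeSet_of_eq_zero (fun e => G₁.incMatrix ℝ v e), SimpleGraph.sum_incMatrix_apply]
  exact fun e he => SimpleGraph.incMatrix_of_notMem_incidenceSet _ fun h => he h.1

theorem edgeIncMatrix_mul_transpose [Fintype V₁] [DecidableEq V₁] [Fintype G₁.edgeSet] {r : ℕ}
    (hreg : G₁.IsRegularOfDegree r) :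
    edgeIncMatrix G₁ * (edgeIncMatrix G₁)ᵀ = (r : ℝ) • 1 + G₁.adjMatrix ℝ := by
  ext v w
  have h := congrFun (congrFun (SimpleGraph.incMatrix_mul_transpose (R := ℝ) (G := G₁)) v) w
  rw [Matrix.mul_apply] at h ⊢
  simp only [edgeIncMatrix, of_apply, transpose_apply] at h ⊢
  rw [sum_edgeSet_of_eq_zero (fun e => G₁.incMatrix ℝ v e * G₁.incMatrix ℝ w e), h]
  · by_cases hvw : v = w
    · simp [hvw, hreg.degree_eq]
    · simp [hvw]
  · intro e he
    rw [SimpleGraph.incMatrix_of_notMem_incidenceSet _ fun h => he h.1, zero_mul]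

theorem degree_subdivisionVertexJoin [Fintype V₁] [Fintype V₂] (a : V₁ ⊕ (↥G₁.edgeSet ⊕ V₂)) :
    ((subdivisionVertexJoin G₁ G₂).degree a : ℝ) =
      Sum.elim (fun v => G₁.degree v + (Fintype.card V₂ : ℝ))
        (Sum.elim (fun _ => 2) fun u => Fintype.card V₁ + (G₂.degree u : ℝ)) a := by
  rw [← sum_adjMatrix_apply, adjMatrix_subdivisionVertexJoin, Fintype.sum_sum_type,
    Fintype.sum_sum_type]
  rcases a with v | e | u
  · simp [edgeIncMatrix, sum_edgeSet_incMatrix]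
  · simp [edgeIncMatrix, SimpleGraph.sum_incMatrix_apply_of_mem_edgeSet]
  · simpa using sum_adjMatrix_apply G₂ u

theorem Aalpha_subdivisionVertexJoin [Fintype V₁] [Fintype V₂] [DecidableEq V₁] [DecidableEq V₂]
    {r₁ : ℕ} (hreg₁ : G₁.IsRegularOfDegree r₁) (α : ℝ) :
    Aalpha (subdivisionVertexJoin G₁ G₂) α =
      fromBlocks ((α * (r₁ + Fintype.card V₂)) • 1)
        (fromCols ((1 - α) • edgeIncMatrix G₁)
          (Matrix.of fun _ _ => 1 - α))
        (fromRows ((1 - α) • edgeIncMatrix G₁)ᵀ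
          (Matrix.of fun _ _ => 1 - α))
        (fromBlocks ((2 * α) • 1) 0 0 ((α * Fintype.card V₁) • 1 + Aalpha G₂ α)) := by
  rw [Aalpha, adjMatrix_subdivisionVertexJoin]
  ext (v | e | u) (w | f | u') <;>
    simp [degree_subdivisionVertexJoin, diagonal_apply, Matrix.one_apply, hreg₁.degree_eq, Aalpha] <;>
    split_ifs <;> ring

end subdivisionVertexJoin

theorem prod_eq_zero_mul_prod_filter {M : Type*} [CommMonoid M] {n : ℕ} [NeZero n]
    (f : Fin n → M) :
    ∏ i, f i = f 0 * ∏ i ∈ Finset.univ.filter (fun i : Fin n => i.val ≠ 0), f i := by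
  rw [← Finset.mul_prod_erase _ _ (Finset.mem_univ 0)]
  congr 2
  ext i
  simp

section charpoly

variable {n₁ n₂ r₁ r₂ : ℕ} [NeZero n₁] [NeZero n₂] {G₁ : SimpleGraph (Fin n₁)}
  {G₂ : SimpleGraph (Fin n₂)} {α : ℝ} {μ₁ : Fin n₁ → ℝ} {μ₂ : Fin n₂ → ℝ}

theorem eval_charpoly_subdivisionVertexJoin (hreg₁ : G₁.IsRegularOfDegree r₁)
    (hreg₂ : G₂.IsRegularOfDegree r₂)
    (hμ₁ch : (Aalpha G₁ α).charpoly = ∏ i, (X - C (μ₁ i)))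
    (hμ₂ch : (Aalpha G₂ α).charpoly = ∏ i, (X - C (μ₂ i)))
    (hμ₁0 : μ₁ 0 = r₁) (hμ₂0 : μ₂ 0 = r₂) {x : ℝ} {g : Fin n₁ → ℝ}
    (hg : ∀ i, g i = (x - α * (r₁ + n₂)) * (x - 2 * α) - (1 - α) * ((1 - 2 * α) * r₁ + μ₁ i))
    (hd : x - 2 * α ≠ 0) (hg0 : g 0 ≠ 0) (hQ : ∀ i, x - α * n₁ - μ₂ i ≠ 0) :
    (x - 2 * α) ^ n₁ * (Aalpha (subdivisionVertexJoin G₁ G₂) α).charpoly.eval x =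
      (x - 2 * α) ^ Fintype.card G₁.edgeSet *
        (∏ i ∈ Finset.univ.filter (fun i : Fin n₂ => i.val ≠ 0), (x - α * n₁ - μ₂ i)) *
        (∏ i ∈ Finset.univ.filter (fun i : Fin n₁ => i.val ≠ 0), g i) *
        ((x - α * n₁ - r₂) * g 0 - n₁ * n₂ * (1 - α) ^ 2 * (x - 2 * α)) := by
  set d := x - 2 * α with hd_def
  set q := x - α * n₁ - r₂ with hq_def
  have hq : q ≠ 0 := by simpa [hμ₂0] using hQ 0
  set Q := (x - α * n₁) • 1 - (1 : ℝ) • Aalpha G₂ α with hQ_def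
  have hdetQ : Q.det = ∏ i, (x - α * n₁ - μ₂ i) := by
    simp [hQ_def, -one_smul, det_smul_one_sub_smul_of_charpoly hμ₂ch]
  have hrowQ : Q *ᵥ 1 = q • 1 := by
    rw [hQ_def, one_smul, Matrix.sub_mulVec, Aalpha_mulVec_one hreg₂, Matrix.smul_mulVec,
      Matrix.one_mulVec, ← sub_smul]
  set k := (1 - α) / d with hk
  set p := x - α * (r₁ + n₂) - (1 - α) ^ 2 * r₁ / d + k * (α * r₁) with hp
  have hgi (i : Fin n₁) : d * (p - k * μ₁ i) = g i := by
    rw [hg, hp, hk]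
    field_simp
    ring
  have hs : p - k * r₁ = g 0 / d := by
    rw [← hgi, hμ₁0]
    field_simp
  have hrowP : (p • 1 - k • Aalpha G₁ α) *ᵥ 1 = (g 0 / d) • 1 := by
    rw [Matrix.sub_mulVec, Matrix.smul_mulVec, Matrix.smul_mulVec, Aalpha_mulVec_one hreg₁,
      Matrix.one_mulVec, smul_smul, ← sub_smul, hs]
  have hblock : scalar _ x - Aalpha (subdivisionVertexJoin G₁ G₂) α =
      fromBlocks ((x - α * (r₁ + n₂)) • 1)
        (fromCols ((α - 1) • edgeIncMatrix G₁) (Matrix.of fun _ _ => α - 1))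
        (fromRows ((α - 1) • edgeIncMatrix G₁)ᵀ (Matrix.of fun _ _ => α - 1))
        (fromBlocks (d • 1) 0 0 Q) := by
    rw [Aalpha_subdivisionVertexJoin hreg₁]
    ext (v | e | u) (w | f | u') <;>
      simp [diagonal_apply, Matrix.one_apply, hQ_def, hd_def] <;> first | (split_ifs <;> ring) | ring
  have hschur : (x - α * (r₁ + n₂)) • 1 -
      d⁻¹ • ((α - 1) • edgeIncMatrix G₁ * ((α - 1) • edgeIncMatrix G₁)ᵀ) =
      p • 1 - k • Aalpha G₁ α := by
    rw [transpose_smul, Matrix.smul_mul, Matrix.mul_smul, edgeIncMatrix_mul_transpose hreg₁,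
      Aalpha_of_isRegular hreg₁, hp, hk]
    ext v w
    simp [Matrix.one_apply]
    split_ifs <;> field_simp <;> ring
  have hdetP : d ^ n₁ * (p • 1 - k • Aalpha G₁ α).det = ∏ i, g i := by
    rw [det_smul_one_sub_smul_of_charpoly hμ₁ch]
    simp [← hgi, Finset.prod_mul_distrib]
  rw [eval_charpoly, hblock, det_fromBlocks_scalar_const _ _ _ hd
    (hdetQ ▸ Finset.prod_ne_zero_iff.2 fun i _ => hQ i) hq hrowQ, hschur,
    det_sub_const_of_mulVec_one (div_ne_zero hg0 hd) hrowP]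
  calc _ = d ^ Fintype.card G₁.edgeSet * Q.det * (d ^ n₁ * (p • 1 - k • Aalpha G₁ α).det) *
        (1 - n₁ * ((α - 1) ^ 2 * n₂ / q) / (g 0 / d)) := by
        simp only [Fintype.card_fin]
        ring
    _ = _ := by
        rw [hdetP, hdetQ, prod_eq_zero_mul_prod_filter g,
          prod_eq_zero_mul_prod_filter fun i => x - α * n₁ - μ₂ i, hμ₂0, ← hq_def]
        field_simp
        ring

theorem pow_mul_charpoly_subdivisionVertexJoin (hreg₁ : G₁.IsRegularOfDegree r₁)
    (hreg₂ : G₂.IsRegularOfDegree r₂)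
    (hμ₁ch : (Aalpha G₁ α).charpoly = ∏ i, (X - C (μ₁ i)))
    (hμ₂ch : (Aalpha G₂ α).charpoly = ∏ i, (X - C (μ₂ i)))
    (hμ₁0 : μ₁ 0 = r₁) (hμ₂0 : μ₂ 0 = r₂) :
    (X - C (2 * α)) ^ n₁ * (Aalpha (subdivisionVertexJoin G₁ G₂) α).charpoly =
      (X - C (2 * α)) ^ Fintype.card G₁.edgeSet *
        (∏ i ∈ Finset.univ.filter (fun i : Fin n₂ => i.val ≠ 0),
          (X - C (α * n₁ + μ₂ i))) *
        (∏ i ∈ Finset.univ.filter (fun i : Fin n₁ => i.val ≠ 0),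
          (X ^ 2 - C (α * (2 + r₁ + n₂)) * X
            + C (α * (α * r₁ + r₁ + 2 * α * n₂) - (1 - α) * (r₁ * (1 - α) + μ₁ i)))) *
        ((X - C (α * n₁ + r₂)) *
            (X ^ 2 - C (α * (2 + r₁ + n₂)) * X - C (2 * (r₁ - 2 * α * r₁ - α ^ 2 * n₂)))
          - C (n₁ * n₂ * (1 - α) ^ 2) * (X - C (2 * α))) := by
  set F : ℝ[X] := X ^ 2 - C (α * (2 + r₁ + n₂)) * X - C (2 * (r₁ - 2 * α * r₁ - α ^ 2 * n₂))
    with hF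
  have hF0 : F ≠ 0 := by
    apply Monic.ne_zero
    rw [hF]
    monicity!
  set N : ℝ[X] := (X - C (2 * α)) * F * ∏ i, (X - C (α * n₁ + μ₂ i)) with hN
  have hN0 : N ≠ 0 := mul_ne_zero (mul_ne_zero (X_sub_C_ne_zero _) hF0)
    (Finset.prod_ne_zero_iff.2 fun i _ => X_sub_C_ne_zero _)
  apply mul_left_cancel₀ hN0
  refine Polynomial.funext fun x => ?_
  rw [eval_mul (p := N), eval_mul (p := N)]
  by_cases hx : eval x N = 0
  · rw [hx, zero_mul, zero_mul]
  congr 1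
  simp only [hN, eval_mul, eval_prod, mul_ne_zero_iff, Finset.prod_ne_zero_iff, ← ne_eq] at hx
  obtain ⟨⟨hd, hFx⟩, hQ⟩ := hx
  have hgF : (x - α * (r₁ + n₂)) * (x - 2 * α) - (1 - α) * ((1 - 2 * α) * r₁ + μ₁ 0) =
      eval x F := by
    simp [hF, hμ₁0]
    ring
  have key := eval_charpoly_subdivisionVertexJoin (x := x) hreg₁ hreg₂ hμ₁ch hμ₂ch hμ₁0 hμ₂0
    (fun _ => rfl) (by simpa using hd) (by rwa [hgF])
    (fun i => by simpa [sub_sub] using hQ i (Finset.mem_univ i))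
  rw [hgF] at key
  simp only [eval_mul, eval_pow, eval_sub, eval_X, eval_C, eval_prod, eval_add, key]
  simp only [sub_sub]
  congr 2
  refine Finset.prod_congr rfl fun i _ => ?_
  ring

end charpoly

theorem two_mul_card_edgeSet {V : Type*} [Fintype V] {G : SimpleGraph V} {r : ℕ}
    [Fintype G.edgeSet] (hreg : G.IsRegularOfDegree r) :
    2 * Fintype.card G.edgeSet = Fintype.card V * r := by
  rw [← SimpleGraph.edgeFinset_card]
  have h := G.sum_degrees_eq_twice_card_edges
  simp only [hreg.degree_eq, Finset.sum_const, Finset.card_univ, smul_eq_mul] at h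
  convert h.symm

theorem card_eq_two_of_isRegularOfDegree_one {V : Type*} [Fintype V] {G : SimpleGraph V}
    (hconn : G.Connected) (hreg : G.IsRegularOfDegree 1) : Fintype.card V = 2 := by
  have h1 := two_mul_card_edgeSet hreg
  have h2 := hconn.card_vert_le_card_edgeSet_add_one
  have := hconn.nonempty
  have h3 : 0 < Fintype.card V := Fintype.card_pos
  simp only [Nat.card_eq_fintype_card] at h2
  omega

theorem sum_eq_trace_Aalpha {n r : ℕ} {G : SimpleGraph (Fin n)}
    (hreg : G.IsRegularOfDegree r) {α : ℝ} {μ : Fin n → ℝ}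
    (hch : (Aalpha G α).charpoly = ∏ i, (X - C (μ i))) : ∑ i, μ i = n * (α * r) := by
  have htr : (Aalpha G α).trace = n * (α * r) := by
    rw [Aalpha_of_isRegular hreg]
    simp [mul_comm]
  have hroots : (Aalpha G α).charpoly.roots = Finset.univ.val.map μ := by
    have h := roots_multiset_prod_X_sub_C (Finset.univ.val.map μ)
    rw [Multiset.map_map] at h
    rw [hch]
    exact h
  rw [← htr, trace_eq_sum_roots_charpoly_of_splits, hroots]
  · rfl
  · rw [hch]
    exact Splits.prod fun i _ => Splits.X_sub_C _

/-- Corollary: the `A_α`-spectrum (as the factorization of the `A_α`-characteristic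
polynomial) of the subdivision-vertex join `G₁ ∨̇ G₂` of an `r₁`-regular graph `G₁`
and an `r₂`-regular graph `G₂`, in the cases `r₁ = 1` and `r₁ ≥ 2`. -/
theorem Aalpha_spectrum_subdivisionVertexJoin_regular
    {n₁ m₁ n₂ r₁ r₂ : ℕ} (G₁ : SimpleGraph (Fin n₁)) (G₂ : SimpleGraph (Fin n₂))
    (hconn₁ : G₁.Connected) (hconn₂ : G₂.Connected)
    (hreg₁ : G₁.IsRegularOfDegree r₁) (hreg₂ : G₂.IsRegularOfDegree r₂)
    (hm : Fintype.card G₁.edgeSet = m₁)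
    (α : ℝ) (hα : α ∈ Set.Icc (0 : ℝ) 1)
    (μ₁ : Fin n₁ → ℝ) (hμ₁ : Antitone μ₁)
    (hμ₁ch : (Aalpha G₁ α).charpoly = ∏ i, (X - C (μ₁ i)))
    (μ₂ : Fin n₂ → ℝ) (hμ₂ : Antitone μ₂)
    (hμ₂ch : (Aalpha G₂ α).charpoly = ∏ i, (X - C (μ₂ i))) :
    (r₁ = 1 →
      (Aalpha (subdivisionVertexJoin G₁ G₂) α).charpoly =
        (X - C (α * (1 + n₂))) *
        (∏ i ∈ Finset.univ.filter (fun i : Fin n₂ => i.val ≠ 0),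
          (X - C (2 * α + μ₂ i))) *
        ((X - C (2 * α + r₂)) *
            (X ^ 2 - C (α * (3 + n₂)) * X - C (2 * (1 - 2 * α - α ^ 2 * n₂)))
          - C (2 * n₂ * (1 - α) ^ 2) * (X - C (2 * α)))) ∧
    (2 ≤ r₁ →
      (Aalpha (subdivisionVertexJoin G₁ G₂) α).charpoly =
        (X - C (2 * α)) ^ (m₁ - n₁) *
        (∏ i ∈ Finset.univ.filter (fun i : Fin n₂ => i.val ≠ 0),
          (X - C (α * n₁ + μ₂ i))) *
        (∏ i ∈ Finset.univ.filter (fun i : Fin n₁ => i.val ≠ 0),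
          (X ^ 2 - C (α * (2 + r₁ + n₂)) * X
            + C (α * (α * r₁ + r₁ + 2 * α * n₂) - (1 - α) * (r₁ * (1 - α) + μ₁ i)))) *
        ((X - C (α * n₁ + r₂)) *
            (X ^ 2 - C (α * (2 + r₁ + n₂)) * X - C (2 * (r₁ - 2 * α * r₁ - α ^ 2 * n₂)))
          - C (n₁ * n₂ * (1 - α) ^ 2) * (X - C (2 * α)))) := by
  have hn₁ : NeZero n₁ := ⟨by rintro rfl; exact hconn₁.nonempty.elim fun i => i.elim0⟩
  have hn₂ : NeZero n₂ := ⟨by rintro rfl; exact hconn₂.nonempty.elim fun i => i.elim0⟩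
  have hμ₁0 := Aalpha_top_eigenvalue hreg₁ hα hμ₁ hμ₁ch
  have key := pow_mul_charpoly_subdivisionVertexJoin hreg₁ hreg₂ hμ₁ch hμ₂ch hμ₁0
    (Aalpha_top_eigenvalue hreg₂ hα hμ₂ hμ₂ch)
  have hcard := two_mul_card_edgeSet hreg₁
  rw [hm, Fintype.card_fin] at hcard
  rw [hm] at key
  have hpow (k : ℕ) : (X - C (2 * α)) ^ k ≠ 0 := pow_ne_zero k (X_sub_C_ne_zero _)
  constructor
  · rintro rfl
    obtain rfl : n₁ = 2 := by simpa using card_eq_two_of_isRegularOfDegree_one hconn₁ hreg₁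
    obtain rfl : m₁ = 1 := by omega
    have hsum := sum_eq_trace_Aalpha hreg₁ hμ₁ch
    rw [Fin.sum_univ_two, hμ₁0] at hsum
    have hμ₁1 : μ₁ 1 = 2 * α - 1 := by
      push_cast at hsum
      linarith
    have hfilter : Finset.univ.filter (fun i : Fin 2 => i.val ≠ 0) = {1} := by
      ext i
      fin_cases i <;> simp
    have hfac : X ^ 2 - C (α * (2 + (1 : ℕ) + n₂)) * X + C (α * (α * (1 : ℕ) + (1 : ℕ) +
        2 * α * n₂) - (1 - α) * ((1 : ℕ) * (1 - α) + μ₁ 1)) =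
        (X - C (2 * α)) * (X - C (α * (1 + n₂))) := by
      rw [hμ₁1]
      refine Polynomial.funext fun x => ?_
      simp
      ring
    rw [hfilter, Finset.prod_singleton, hfac] at key
    apply mul_left_cancel₀ (hpow 2)
    rw [key]
    have hprod : ∏ i ∈ Finset.univ.filter (fun i : Fin n₂ => i.val ≠ 0),
          (X - C (α * (2 : ℕ) + μ₂ i)) =
        ∏ i ∈ Finset.univ.filter (fun i : Fin n₂ => i.val ≠ 0), (X - C (2 * α + μ₂ i)) := by
      simp only [Nat.cast_ofNat, mul_comm]
    rw [hprod]
    refine Polynomial.funext fun x => ?_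
    simp
    ring
  · intro hr
    obtain ⟨k, rfl⟩ : ∃ k, m₁ = n₁ + k := Nat.exists_eq_add_of_le (by nlinarith)
    apply mul_left_cancel₀ (hpow n₁)
    rw [key, Nat.add_sub_cancel_left, pow_add]
    simp only [mul_assoc]
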